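/- Let x be a higher-order type in which each label occurs at most once and let B ∈ out(x). If b ∈ D(x), then the bit assignment b′ defined by b′ B = false and b′ i = b i for i ≠ B also belongs to D(x). -/

import Mathlib

/-- Higher-order types over a type `σ` of elementary labels. -/
inductive Ty (σ : Type) : Type where
  | elem : σ → Ty σ
  | arrow : Ty σ → Ty σ → Ty σ

namespace Ty

variable {σ : Type} [DecidableEq σ]

/-- The labels occurring in a type. -/
def leaves : Ty σ → Finset σ
  | elem A => {A}
  | arrow x y => leaves x ∪ leaves y

/-- Every label occurs at most once. -/
def NoDup : Ty σ → Prop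
  | elem _ => True
  | arrow x y => NoDup x ∧ NoDup y ∧ Disjoint x.leaves y.leaves

/-- The pair (input labels, output labels) of a type. -/
def inOut : Ty σ → Finset σ × Finset σ
  | elem A => (∅, {A})
  | arrow x y => ((inOut x).2 ∪ (inOut y).1, (inOut x).1 ∪ (inOut y).2)

/-- Input labels. -/
def ins (x : Ty σ) : Finset σ := (inOut x).1

/-- Output labels. -/
def outs (x : Ty σ) : Finset σ := (inOut x).2

/-- A bit assignment `b` is all-ones on a finite set `S` of labels. -/
def AllOnes (b : σ → Bool) (S : Finset σ) : Prop := ∀ i ∈ S, b i = true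

/-- The set `D(x)` of bit assignments of a type. -/
def D : Ty σ → Set (σ → Bool)
  | elem A => {b | b A = false}
  | arrow x y => {b | b ∈ D y} ∪ {b | b ∉ D x ∧ ¬ AllOnes b x.leaves ∧ b ∉ D y}

/-- The immediate subterm relation. -/
inductive ImmSub : Ty σ → Ty σ → Prop
  | left (x z : Ty σ) : ImmSub x (arrow x z)
  | right (x z : Ty σ) : ImmSub x (arrow z x)

/-- Subterms: reflexive-transitive closure of the immediate subterm relation. -/
def Subterm {σ : Type} : Ty σ → Ty σ → Prop := Relation.ReflTransGen ImmSub

/-- The critical set `S(x,A,B)`. -/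
def Sset (x : Ty σ) (A B : σ) : Set (σ → Bool) :=
  {b | b A = false ∧ b B = false ∧ AllOnes b (x.outs \ {B})}

/-- `x` is no-signalling from `A` to `B`. -/
def NoSig (x : Ty σ) (A B : σ) : Prop := D x ∩ Sset x A B = ∅

/-- `x` is full-signalling from `A` to `B`. -/
def FullSig (x : Ty σ) (A B : σ) : Prop :=
  ¬ ∃ b : σ → Bool, ¬ AllOnes b x.leaves ∧ b ∉ D x ∧ b A = false ∧ b B = false ∧
    AllOnes b (x.ins \ {A})

/-- A pairing on `x`: a finite set of pairs (input label, output label) with all first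
components distinct and all second components distinct. -/
def IsPairing (x : Ty σ) (H : Finset (σ × σ)) : Prop :=
  (∀ p ∈ H, p.1 ∈ x.ins ∧ p.2 ∈ x.outs) ∧
  (∀ p ∈ H, ∀ q ∈ H, p.1 = q.1 → p = q) ∧
  (∀ p ∈ H, ∀ q ∈ H, p.2 = q.2 → p = q)

/-- The critical set `S(x,H)` for a pairing `H`. -/
def SsetH (x : Ty σ) (H : Finset (σ × σ)) : Set (σ → Bool) :=
  {b | AllOnes b (x.outs \ H.image Prod.snd) ∧ (∀ p ∈ H, b p.1 = b p.2) ∧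
    ∃ p ∈ H, b p.1 = false}

/-- The set `D(x ⊗ y)` for the tensor of two types with disjoint leaves. -/
def Dtensor (x y : Ty σ) : Set (σ → Bool) :=
  {b | b ∈ D x ∧ AllOnes b y.leaves} ∪ {b | b ∈ D y ∧ AllOnes b x.leaves} ∪ (D x ∩ D y)

/-- No-signalling from `A` to `B` for given data (set of bit assignments, output labels). -/
def NoSigData (D0 : Set (σ → Bool)) (outs0 : Finset σ) (A B : σ) : Prop :=
  D0 ∩ {b | b A = false ∧ b B = false ∧ AllOnes b (outs0 \ {B})} = ∅

/-- Full-signalling from `A` to `B` for given data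
(set of bit assignments, leaves, input labels). -/
def FullSigData (D0 : Set (σ → Bool)) (leaves0 ins0 : Finset σ) (A B : σ) : Prop :=
  ¬ ∃ b : σ → Bool, ¬ AllOnes b leaves0 ∧ b ∉ D0 ∧ b A = false ∧ b B = false ∧
    AllOnes b (ins0 \ {A})

end Ty

/-
The set `D x` is decreasing in the output bits and increasing in the input bits of `x`. This goes
by induction on `x`, since passing to the left of an arrow swaps inputs with outputs and complements
`D`. The one obstruction is the all-ones assignment, which the complement leaves out; it is
harmless because ones on all inputs put every other assignment into `D x`, just as ones on all
outputs keep every assignment out of it. When no label repeats, an output is not an input, so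
lowering its bit stays in `D x`.
-/

namespace Ty

variable {σ : Type} [DecidableEq σ] {x y : Ty σ} {b c : σ → Bool}

theorem ins_arrow : (arrow x y).ins = x.outs ∪ y.ins := rfl

theorem outs_arrow : (arrow x y).outs = x.ins ∪ y.outs := rfl

theorem mem_D_arrow : b ∈ D (arrow x y) ↔ b ∈ D y ∨ b ∉ D x ∧ ¬ AllOnes b x.leaves := by
  simp only [D, Set.mem_union, Set.mem_ofPred_eq]
  tauto

theorem allOnes_union {S T : Finset σ} : AllOnes b (S ∪ T) ↔ AllOnes b S ∧ AllOnes b T :=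
  Finset.forall_mem_union

mutual

theorem ins_subset_leaves : ∀ x : Ty σ, x.ins ⊆ x.leaves
  | elem _ => Finset.empty_subset _
  | arrow x y => Finset.union_subset_union (outs_subset_leaves x) (ins_subset_leaves y)

theorem outs_subset_leaves : ∀ x : Ty σ, x.outs ⊆ x.leaves
  | elem _ => Finset.Subset.refl _
  | arrow x y => Finset.union_subset_union (ins_subset_leaves x) (outs_subset_leaves y)

end

theorem NoDup.disjoint_ins_outs (hx : x.NoDup) : Disjoint x.ins x.outs := by
  induction x with
  | elem A => exact Finset.disjoint_empty_left _
  | arrow x y ihx ihy =>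
    obtain ⟨hx, hy, hxy⟩ := hx
    rw [ins_arrow, outs_arrow, Finset.disjoint_union_left, Finset.disjoint_union_right,
      Finset.disjoint_union_right]
    exact ⟨⟨(ihx hx).symm, hxy.mono (outs_subset_leaves x) (outs_subset_leaves y)⟩,
      hxy.symm.mono (ins_subset_leaves y) (ins_subset_leaves x), ihy hy⟩

theorem NoDup.notMem_ins_of_mem_outs (hx : x.NoDup) {B : σ} (hB : B ∈ x.outs) : B ∉ x.ins :=
  Finset.disjoint_right.mp hx.disjoint_ins_outs hB

mutual

theorem mem_D_of_allOnes_ins : ∀ {x : Ty σ}, AllOnes b x.ins → ¬ AllOnes b x.leaves → b ∈ D x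
  | elem A, _, hleaves => by simpa [AllOnes, leaves, D] using hleaves
  | arrow x y, hins, hleaves => by
    obtain ⟨houts_x, hins_y⟩ := allOnes_union.mp hins
    rw [mem_D_arrow]
    by_cases hy : AllOnes b y.leaves
    · have hx : ¬ AllOnes b x.leaves := fun hx => hleaves (allOnes_union.mpr ⟨hx, hy⟩)
      exact Or.inr ⟨notMem_D_of_allOnes_outs houts_x, hx⟩
    · exact Or.inl (mem_D_of_allOnes_ins hins_y hy)

theorem notMem_D_of_allOnes_outs : ∀ {x : Ty σ}, AllOnes b x.outs → b ∉ D x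
  | elem A, houts => by simpa [AllOnes, outs, inOut, D] using houts
  | arrow x y, houts => by
    obtain ⟨hins_x, houts_y⟩ := allOnes_union.mp houts
    rw [mem_D_arrow]
    rintro (hy | ⟨hx, hleaves⟩)
    · exact notMem_D_of_allOnes_outs houts_y hy
    · exact hx (mem_D_of_allOnes_ins hins_x hleaves)

end

theorem mem_D_of_le_on_outs_of_ge_on_ins (houts : ∀ i ∈ x.outs, c i ≤ b i)
    (hins : ∀ i ∈ x.ins, b i ≤ c i) (hb : b ∈ D x) : c ∈ D x := by
  induction x generalizing b c with
  | elem A =>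
    have hA : b A = false := hb
    exact le_bot_iff.mp ((houts A (Finset.mem_singleton_self A)).trans_eq hA)
  | arrow x y ihx ihy =>
    obtain ⟨hins_x, houts_y⟩ := Finset.forall_mem_union.mp houts
    obtain ⟨houts_x, hins_y⟩ := Finset.forall_mem_union.mp hins
    rw [mem_D_arrow] at hb ⊢
    refine hb.imp (ihy houts_y hins_y) fun ⟨hbx, hb_leaves⟩ =>
      ⟨fun hcx => hbx (ihx houts_x hins_x hcx), fun hc_leaves => ?_⟩
    have hb_ins : AllOnes b x.ins := fun i hi =>
      top_le_iff.mp ((hc_leaves i (ins_subset_leaves x hi)).ge.trans (hins_x i hi))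
    exact hbx (mem_D_of_allOnes_ins hb_ins hb_leaves)

end Ty

open Ty in
theorem stmt5_general {σ : Type} [DecidableEq σ] (x : Ty σ) (B : σ) (hB : B ∉ x.ins)
    (b : σ → Bool) (hb : b ∈ D x) : Function.update b B false ∈ D x := by
  have hle : Function.update b B false ≤ b := update_le_self_iff.mpr (Bool.false_le _)
  refine mem_D_of_le_on_outs_of_ge_on_ins (fun i _ => hle i) (fun i hi => ?_) hb
  exact (Function.update_of_ne (ne_of_mem_of_not_mem hi hB) _ _).ge

open Ty in
/-- flipping an output bit of an element of `D(x)` to `false` stays in `D(x)`. -/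
theorem stmt5 {σ : Type} [DecidableEq σ] (x : Ty σ) (hx : x.NoDup)
    (B : σ) (hB : B ∈ x.outs) (b : σ → Bool) (hb : b ∈ D x) :
    Function.update b B false ∈ D x := by
  exact stmt5_general x B (hx.notMem_ins_of_mem_outs hB) b hb
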